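/- arXiv:2509.06634 — 2 statements merged into one kernel-verified Lean document; each statement's English description precedes it below -/
import Mathlib

section
/- Every infinite-dimensional C*-algebra A contains an infinite sequence a₁, a₂, a₃, … of nonzero positive elements such that aⱼaₖ = 0 whenever j ≠ k. -/
/-!
Elements `x, y` with `star x * y = 0` are called orthogonal; orthogonal `x`, `y` have
`x * star x * (y * star y) = 0`. Suppose that there is no orthogonal sequence. Then every
infinite-dimensional right ideal `J` contains a nonzero `x` orthogonal to some infinite-dimensional
right ideal `K ≤ J`, and iterating this from `⊤` produces an orthogonal sequence after all.

If `J` contains nonzero orthogonal `x, y`, then either `y * A` is infinite-dimensional and serves as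
`K`, or it is finite-dimensional and the kernel of multiplication by `y * star y` on `J` serves.
Otherwise the functional calculus shows that every self-adjoint `d ∈ J` has at most one nonzero
spectral value, which forces `x * star y` for `x, y ∈ J` to be a multiple of one fixed element `d`.
Thus `x * star y` is essentially a scalar product on `J`, and Gram–Schmidt yields the sequence.
-/

section Sequences

theorem exists_seq_of_forall_exists_subset {ι α : Type*} {S : ι → Set α} {r : α → α → Prop}
    (hr : ∀ x y, r x y → r y x)
    (h : ∀ i, ∃ x ∈ S i, ∃ j, S j ⊆ S i ∧ ∀ y ∈ S j, r x y) (i : ι) :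
    ∃ x : ℕ → α, (∀ n, x n ∈ S i) ∧ Pairwise fun m n => r (x m) (x n) := by
  choose x hx next hsub hrel using h
  let state : ℕ → ι := fun n => next^[n] i
  have state_succ (n : ℕ) : state (n + 1) = next (state n) :=
    Function.iterate_succ_apply' next n i
  have hanti : Antitone (S ∘ state) := antitone_nat_of_succ_le fun n => by
    simpa only [Function.comp_apply, state_succ] using hsub (state n)
  have hlt {m n : ℕ} (hmn : m < n) : r (x (state m)) (x (state n)) := by
    refine hrel _ _ ?_
    rw [← state_succ]
    exact hanti hmn (hx (state n))
  exact ⟨x ∘ state, fun n => hanti (Nat.zero_le n) (hx (state n)),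
    fun m n hmn => hmn.lt_or_gt.elim hlt fun hnm => hr _ _ (hlt hnm)⟩

/-- An infinite orthogonal system: nonzero elements `x n` with `star (x j) * x k = 0` for `j ≠ k`.
The form `star x * y` is chosen because it is symmetric up to `star` and stable under right
multiplication of `y`. -/
def HasOrthogonalSeq (A : Type*) [Mul A] [Zero A] [Star A] : Prop :=
  ∃ x : ℕ → A, (∀ n, x n ≠ 0) ∧ Pairwise fun j k => star (x j) * x k = 0

theorem HasOrthogonalSeq.exists_nonneg {A : Type*} [NonUnitalNormedRing A] [StarRing A]
    [CStarRing A] [PartialOrder A] [StarOrderedRing A] (h : HasOrthogonalSeq A) :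
    ∃ a : ℕ → A, (∀ n, a n ≠ 0 ∧ 0 ≤ a n) ∧ ∀ j k, j ≠ k → a j * a k = 0 := by
  obtain ⟨x, hx, horth⟩ := h
  refine ⟨fun n => x n * star (x n),
    fun n => ⟨(CStarRing.mul_star_self_ne_zero_iff _).2 (hx n), mul_star_self_nonneg _⟩,
    fun j k hjk => ?_⟩
  calc x j * star (x j) * (x k * star (x k))
      = x j * (star (x j) * x k) * star (x k) := by simp only [mul_assoc]
    _ = 0 := by rw [horth hjk, mul_zero, zero_mul]

end Sequences

section RightIdeals

variable {R A : Type*} [Ring R] [NonUnitalRing A] [Module R A]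

/-- The submodule `J` is a right ideal: it absorbs multiplication from the right. (The library's
`Ideal` is a left ideal of a unital ring.) -/
def IsRightIdeal (J : Submodule R A) : Prop :=
  ∀ x ∈ J, ∀ a, x * a ∈ J

variable [SMulCommClass R A A]

theorem isRightIdeal_range_mulLeft (x : A) :
    IsRightIdeal (LinearMap.range (LinearMap.mulLeft R x)) := by
  rintro _ ⟨u, rfl⟩ a
  exact ⟨u * a, (mul_assoc x u a).symm⟩

theorem IsRightIdeal.inf_ker_mulLeft {J : Submodule R A} (hJ : IsRightIdeal J) (x : A) :
    IsRightIdeal (J ⊓ LinearMap.ker (LinearMap.mulLeft R x)) := by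
  rintro y ⟨hyJ, hy⟩ a
  have hxy : x * y = 0 := hy
  exact ⟨hJ y hyJ a, show x * (y * a) = 0 by rw [← mul_assoc, hxy, zero_mul]⟩

end RightIdeals

section GramSchmidt

variable {R A : Type*} [Ring R] [IsNoetherianRing R] [NonUnitalRing A] [StarRing A] [Module R A]
  [IsScalarTower R A A]

theorem hasOrthogonalSeq_of_mul_star_mem {M N : Submodule R A} (hM : ¬ M.FG) (hN : N.FG)
    (hMN : ∀ x ∈ M, ∀ y ∈ M, x * star y ∈ N) : HasOrthogonalSeq A := by
  let S : {K : Submodule R A // K ≤ M ∧ ¬ K.FG} → Set A := fun K => {x | x ∈ K.1 ∧ x ≠ 0}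
  have descend (K) : ∃ x ∈ S K, ∃ L, S L ⊆ S K ∧ ∀ y ∈ S L, x * star y = 0 := by
    obtain ⟨K, hKM, hK⟩ := K
    obtain ⟨x, hxK, hx0⟩ : ∃ x ∈ K, x ≠ 0 :=
      K.exists_mem_ne_zero_of_ne_bot fun hbot => hK (hbot ▸ Submodule.fg_bot)
    let f := LinearMap.mulRight R (star x)
    have hmap : (K.map f).FG := hN.of_le <| Submodule.map_le_iff_le_comap.2 fun y hy =>
      hMN y (hKM hy) x (hKM hxK)
    refine ⟨x, ⟨hxK, hx0⟩, ⟨K ⊓ LinearMap.ker f, inf_le_left.trans hKM,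
      fun h => hK (Submodule.fg_of_fg_map_of_fg_inf_ker f hmap h)⟩,
      fun y hy => ⟨hy.1.1, hy.2⟩, fun y hy => ?_⟩
    have hyx : y * star x = 0 := hy.1.2
    simpa using congr(star $hyx)
  obtain ⟨x, hx, horth⟩ := exists_seq_of_forall_exists_subset
    (fun x y hxy => by simpa using congr(star $hxy)) descend ⟨M, le_rfl, hM⟩
  exact ⟨fun n => star (x n), fun n => star_ne_zero.2 (hx n).2,
    fun j k hjk => by simpa only [star_star] using horth hjk⟩

end GramSchmidt

section CStarAlgebra

variable {A : Type*} [NonUnitalCStarAlgebra A]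

theorem exists_lt_mem_quasispectrum {d : A} (hd : IsSelfAdjoint d)
    (h : ∀ l : ℝ, d * d ≠ l • d) :
    ∃ s ∈ quasispectrum ℝ d, ∃ t ∈ quasispectrum ℝ d, s ≠ 0 ∧ t ≠ 0 ∧ s < t := by
  by_contra! hle
  obtain ⟨l, hl⟩ : ∃ l : ℝ, ∀ x ∈ quasispectrum ℝ d, x = 0 ∨ x = l := by
    by_cases h0 : ∃ l ∈ quasispectrum ℝ d, l ≠ 0
    · obtain ⟨l, hl, hl0⟩ := h0
      exact ⟨l, fun x hx => or_iff_not_imp_left.2 fun hx0 =>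
        le_antisymm (hle l hl x hx hl0 hx0) (hle x hx l hl hx0 hl0)⟩
    · push Not at h0
      exact ⟨0, fun x hx => .inl (h0 x hx)⟩
  refine h l ?_
  calc d * d = cfcₙ (fun x : ℝ => x * x) d := by rw [cfcₙ_mul .., cfcₙ_id' ℝ d]
    _ = cfcₙ (fun x : ℝ => l * x) d := cfcₙ_congr fun x hx => by
      rcases hl x hx with rfl | rfl <;> simp
    _ = l • d := cfcₙ_const_mul_id l d

theorem exists_orthogonal_mul_of_mul_self_ne_smul {d : A} (hd : IsSelfAdjoint d)
    (h : ∀ l : ℝ, d * d ≠ l • d) :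
    ∃ u v : A, d * u ≠ 0 ∧ d * v ≠ 0 ∧ star (d * u) * (d * v) = 0 := by
  obtain ⟨s, hs, t, ht, hs0, ht0, hst⟩ := exists_lt_mem_quasispectrum hd h
  obtain ⟨m, hsm, hmt⟩ := exists_between hst
  -- The factor `x` makes the function vanish at `0`, as `cfcₙ` requires.
  let f : ℝ → ℝ := fun x => x * max (m - x) 0
  let g : ℝ → ℝ := fun x => x * max (x - m) 0
  have hf : Continuous f := by fun_prop
  have hg : Continuous g := by fun_prop
  have hf0 : f 0 = 0 := zero_mul _
  have hg0 : g 0 = 0 := zero_mul _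
  have hmul {k : ℝ → ℝ} (hk : Continuous k) (hk0 : k 0 = 0) :
      d * cfcₙ k d = cfcₙ (fun x => x * k x) d := by
    rw [cfcₙ_mul (fun x => x) k d, cfcₙ_id' ℝ d]
  have hne {k : ℝ → ℝ} (hk : Continuous k) (hk0 : k 0 = 0) {x : ℝ}
      (hx : x ∈ quasispectrum ℝ d) (hxk : x * k x ≠ 0) : d * cfcₙ k d ≠ 0 := by
    rw [hmul hk hk0, ← cfcₙ_const_zero ℝ d]
    intro heq
    have heqOn : (quasispectrum ℝ d).EqOn (fun x => x * k x) fun _ => 0 :=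
      eqOn_of_cfcₙ_eq_cfcₙ heq
    exact hxk (heqOn hx)
  have hfg : (fun x => x * f x * (x * g x)) = fun _ => 0 := by
    funext x
    rcases le_total x m with hx | hx <;> simp [f, g, hx]
  refine ⟨cfcₙ f d, cfcₙ g d, hne hf hf0 hs ?_, hne hg hg0 ht ?_, ?_⟩
  · simp [f, hs0, hsm]
  · simp [g, ht0, hmt]
  · have hsa : IsSelfAdjoint (cfcₙ (fun x => x * f x) d) := cfcₙ_predicate _ d
    rw [hmul hf hf0, hmul hg hg0, hsa.star_eq, ← cfcₙ_mul .., hfg, cfcₙ_const_zero]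

variable {J : Submodule ℂ A}

theorem IsRightIdeal.exists_mul_self_eq_smul (hJ : IsRightIdeal J)
    (hirr : ∀ x ∈ J, ∀ y ∈ J, star x * y = 0 → x = 0 ∨ y = 0)
    {d : A} (hdJ : d ∈ J) (hd : IsSelfAdjoint d) : ∃ l : ℝ, d * d = l • d := by
  by_contra! h
  obtain ⟨u, v, hu, hv, huv⟩ := exists_orthogonal_mul_of_mul_self_ne_smul hd h
  exact (hirr _ (hJ d hdJ u) _ (hJ d hdJ v) huv).elim hu hv

theorem IsRightIdeal.exists_forall_isSelfAdjoint_mem_span (hJ : IsRightIdeal J)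
    (hirr : ∀ x ∈ J, ∀ y ∈ J, star x * y = 0 → x = 0 ∨ y = 0) :
    ∃ d : A, ∀ e ∈ J, IsSelfAdjoint e → e ∈ Submodule.span ℝ {d} := by
  by_cases hbot : J = ⊥
  · exact ⟨0, fun e he _ => by simp_all⟩
  obtain ⟨x, hxJ, hx0⟩ := J.exists_mem_ne_zero_of_ne_bot hbot
  let d := x * star x
  have hdJ : d ∈ J := hJ x hxJ (star x)
  have hd : IsSelfAdjoint d := .mul_star_self x
  have hd0 : d ≠ 0 := (CStarRing.mul_star_self_ne_zero_iff x).2 hx0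
  obtain ⟨l, hl⟩ := hJ.exists_mul_self_eq_smul hirr hdJ hd
  have hl0 : l ≠ 0 := by
    rintro rfl
    rw [zero_smul] at hl
    exact (CStarRing.star_mul_self_ne_zero_iff d).2 hd0 (by rw [hd.star_eq, hl])
  -- `l⁻¹ • d` is a projection; it is a left unit of `J` because `y - l⁻¹ • d * y` is orthogonal
  -- to `d`.
  have hunit {y : A} (hy : y ∈ J) : d * y = l • y := by
    have horth : star d * (d * y - l • y) = 0 := by
      rw [hd.star_eq, mul_sub, ← mul_assoc, hl, smul_mul_assoc, mul_smul_comm, sub_self]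
    have hmem : d * y - l • y ∈ J := J.sub_mem (hJ d hdJ y) (J.smul_of_tower_mem l hy)
    exact sub_eq_zero.1 ((hirr d hdJ _ hmem horth).resolve_left hd0)
  refine ⟨d, fun e heJ he => ?_⟩
  have hed : e * d = l • e := by
    simpa [he.star_eq, hd.star_eq] using congr(star $(hunit heJ))
  obtain ⟨m, hm⟩ := hJ.exists_mul_self_eq_smul hirr heJ he
  have horth : star e * (m • d - l • e) = 0 := by
    rw [he.star_eq, mul_sub, mul_smul_comm, mul_smul_comm, hed, hm, smul_comm, sub_self]
  have hmem : m • d - l • e ∈ J :=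
    J.sub_mem (J.smul_of_tower_mem m hdJ) (J.smul_of_tower_mem l heJ)
  rcases hirr e heJ _ hmem horth with rfl | h
  · exact Submodule.zero_mem _
  · exact Submodule.mem_span_singleton.2 ⟨l⁻¹ * m, by
      rw [mul_smul, sub_eq_zero.1 h, inv_smul_smul₀ hl0]⟩

theorem IsRightIdeal.exists_mul_star_mem_span (hJ : IsRightIdeal J)
    (hirr : ∀ x ∈ J, ∀ y ∈ J, star x * y = 0 → x = 0 ∨ y = 0) :
    ∃ d : A, ∀ x ∈ J, ∀ y ∈ J, x * star y ∈ Submodule.span ℂ {d} := by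
  obtain ⟨d, hd⟩ := hJ.exists_forall_isSelfAdjoint_mem_span hirr
  refine ⟨d, fun x hx y hy => ?_⟩
  have hsa {e : A} (heJ : e ∈ J) (he : IsSelfAdjoint e) : e ∈ Submodule.span ℂ {d} :=
    Submodule.span_le_restrictScalars ℝ ℂ {d} (hd e heJ he)
  have hz : x * star y ∈ J := hJ x hx (star y)
  have hz' : star (x * star y) ∈ J := by simpa using hJ y hy (star x)
  rw [← realPart_add_I_smul_imaginaryPart (x * star y)]
  refine add_mem (hsa ?_ (realPart _).2) (Submodule.smul_mem _ _ (hsa ?_ (imaginaryPart _).2))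
  · rw [realPart_apply_coe]
    exact J.smul_of_tower_mem _ (J.add_mem hz hz')
  · rw [imaginaryPart_apply_coe]
    exact J.smul_mem _ (J.smul_of_tower_mem _ (J.sub_mem hz hz'))

theorem IsRightIdeal.exists_orthogonal_of_not_fg (hA : ¬ HasOrthogonalSeq A)
    (hJ : IsRightIdeal J) (hfg : ¬ J.FG) :
    ∃ x ∈ J, x ≠ 0 ∧ ∃ K ≤ J, IsRightIdeal K ∧ ¬ K.FG ∧ ∀ y ∈ K, star x * y = 0 := by
  obtain ⟨x, hx, y, hy, hxy, hx0, hy0⟩ :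
      ∃ x ∈ J, ∃ y ∈ J, star x * y = 0 ∧ x ≠ 0 ∧ y ≠ 0 := by
    by_contra! hirr
    obtain ⟨d, hd⟩ := hJ.exists_mul_star_mem_span fun x hx y hy hxy =>
      or_iff_not_imp_left.2 (hirr x hx y hy hxy)
    exact hA (hasOrthogonalSeq_of_mul_star_mem hfg (Submodule.fg_span_singleton d) hd)
  by_cases hyA : (LinearMap.range (LinearMap.mulLeft ℂ y)).FG
  · let f := LinearMap.mulLeft ℂ (y * star y)
    have hmap : (J.map f).FG := by
      refine hyA.of_le ?_
      rintro _ ⟨z, -, rfl⟩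
      exact ⟨star y * z, (mul_assoc y (star y) z).symm⟩
    refine ⟨y * star y, hJ y hy _, (CStarRing.mul_star_self_ne_zero_iff y).2 hy0,
      J ⊓ LinearMap.ker f, inf_le_left, hJ.inf_ker_mulLeft _,
      fun h => hfg (Submodule.fg_of_fg_map_of_fg_inf_ker f hmap h), fun z hz => ?_⟩
    rw [(IsSelfAdjoint.mul_star_self y).star_eq]
    exact hz.2
  · refine ⟨x, hx, hx0, LinearMap.range (LinearMap.mulLeft ℂ y), ?_,
      isRightIdeal_range_mulLeft y, hyA, ?_⟩
    · rintro _ ⟨a, rfl⟩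
      exact hJ y hy a
    · rintro _ ⟨a, rfl⟩
      rw [LinearMap.mulLeft_apply, ← mul_assoc, hxy, zero_mul]

theorem hasOrthogonalSeq_of_not_finiteDimensional (h : ¬ FiniteDimensional ℂ A) :
    HasOrthogonalSeq A := by
  by_contra hA
  let S : {J : Submodule ℂ A // IsRightIdeal J ∧ ¬ J.FG} → Set A := fun J => {x | x ∈ J.1 ∧ x ≠ 0}
  have descend (J) : ∃ x ∈ S J, ∃ K, S K ⊆ S J ∧ ∀ y ∈ S K, star x * y = 0 := by
    obtain ⟨J, hJ, hfg⟩ := J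
    obtain ⟨x, hxJ, hx0, K, hKJ, hK, hKfg, hxK⟩ := hJ.exists_orthogonal_of_not_fg hA hfg
    exact ⟨x, ⟨hxJ, hx0⟩, ⟨K, hK, hKfg⟩, fun y hy => ⟨hKJ hy.1, hy.2⟩, fun y hy => hxK y hy.1⟩
  obtain ⟨x, hx, horth⟩ := exists_seq_of_forall_exists_subset
    (fun x y hxy => by simpa using congr(star $hxy)) descend
    ⟨⊤, fun _ _ _ => Submodule.mem_top, fun htop => h ⟨htop⟩⟩
  exact hA ⟨x, fun n => (hx n).2, horth⟩

end CStarAlgebra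

theorem stmt5_general {A : Type*} [NonUnitalCStarAlgebra A] [PartialOrder A] [StarOrderedRing A]
    (h : ¬ FiniteDimensional ℂ A) :
    ∃ a : ℕ → A, (∀ n, a n ≠ 0 ∧ 0 ≤ a n) ∧ ∀ j k, j ≠ k → a j * a k = 0 :=
  (hasOrthogonalSeq_of_not_finiteDimensional h).exists_nonneg

/-- Kadison–Ringrose, Exercise 4.6.13: every infinite-dimensional C*-algebra
contains an infinite sequence of pairwise orthogonal nonzero positive elements. -/
theorem stmt5 {A : Type*} [NormedRing A] [StarRing A] [CStarRing A] [CompleteSpace A]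
    [NormedAlgebra ℂ A] [StarModule ℂ A] [PartialOrder A] [StarOrderedRing A]
    (h : ¬ FiniteDimensional ℂ A) :
    ∃ a : ℕ → A, (∀ n, a n ≠ 0 ∧ 0 ≤ a n) ∧ ∀ j k, j ≠ k → a j * a k = 0 := by
  let _ : CStarAlgebra A := {}
  exact stmt5_general h
end

section
/- Let A be a C*-algebra, E, H : A → A linear, and F, G : A → A surjective maps continuous at zero. If D₁ : A → A is an (E, F, G, H)-derivation satisfying (G(ab) − G(a)G(b))H(c) = 0 or E(c)(F(ab) − F(a)F(b)) = 0 for all a, b, c ∈ A, then D₁, E, and H are continuous. -/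
/-!
Under the condition on `G`, associativity of `D₁ (a * (b * c))` with `G a = 1` expresses
`H (b * c) - G b * H c` through `E` and `F` as a continuous function of `c`: the map `H` intertwines
left multiplication by `b` with that by `G b` up to a continuous error. Its continuity ideal
`L = {b | c ↦ H (b * c) is continuous}` is a closed two-sided ideal by Banach–Steinhaus. A sequence
in `L` tending rapidly to `0` has a common left factor in `L`, so `H` is continuous on `L`. An
infinite-dimensional C⋆-algebra contains a sequence of nonzero orthogonal self-adjoint elements,
which in `A ⧸ L` a gliding hump argument excludes. Hence `L` has finite codimension and `H` is
continuous; then so are `D₁` and `E`. The condition on `F` is the condition on `G` in the opposite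
algebra.
-/

open Filter Topology

section ClosedIdeals

theorem norm_quotient_mul_le {R : Type*} [SeminormedRing R] (I : Ideal R) [I.IsTwoSided]
    (x y : R ⧸ I) : ‖x * y‖ ≤ ‖x‖ * ‖y‖ := by
  refine le_mul_of_forall_lt₀ fun r hr s hs => ?_
  obtain ⟨a, rfl, ha⟩ := QuotientAddGroup.norm_lt_iff.1 hr
  obtain ⟨b, rfl, hb⟩ := QuotientAddGroup.norm_lt_iff.1 hs
  calc ‖Ideal.Quotient.mk I (a * b)‖
      ≤ ‖a * b‖ := Submodule.Quotient.norm_mk_le I _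
    _ ≤ ‖a‖ * ‖b‖ := norm_mul_le a b
    _ ≤ r * s := mul_le_mul ha.le hb.le (norm_nonneg b) ((norm_nonneg a).trans ha.le)

variable {A : Type*} [CStarAlgebra A]

theorem norm_mul_cfc_star_mul_self_le (x : A) {f : ℝ → ℝ} {C : ℝ} (hC : 0 ≤ C)
    (hf : ContinuousOn f (spectrum ℝ (star x * x)))
    (hfC : ∀ t ∈ spectrum ℝ (star x * x), f t * t * f t ≤ C ^ 2) :
    ‖x * cfc f (star x * x)‖ ≤ C := by
  have hfx : IsSelfAdjoint (cfc f (star x * x)) := cfc_predicate f _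
  have norm_sq : ‖x * cfc f (star x * x)‖ ^ 2 = ‖cfc (fun t => f t * t * f t) (star x * x)‖ := by
    rw [cfc_mul (fun t => f t * t) f _, cfc_mul f (fun t => t) _, cfc_id' ℝ (star x * x), sq,
      ← CStarRing.norm_star_mul_self, star_mul, hfx.star_eq]
    simp only [mul_assoc]
  rw [← sq_le_sq₀ (norm_nonneg _) hC, norm_sq]
  refine norm_cfc_le (sq_nonneg C) fun t ht => ?_
  rw [mul_right_comm, Real.norm_of_nonneg
    (mul_nonneg (mul_self_nonneg _) (spectrum_star_mul_self_nonneg t ht)), mul_right_comm]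
  exact hfC t ht

-- With `h = x⋆ x`, the element `e = (ε² + h)⁻¹ h` works: `1 - e = ε² (ε² + h)⁻¹`.
theorem exists_mem_norm_mul_one_sub_le (I : Ideal A) {x : A} (hx : x ∈ I) {ε : ℝ} (hε : 0 < ε) :
    ∃ e ∈ I, ‖1 - e‖ ≤ 1 ∧ ‖x * (1 - e)‖ ≤ ε := by
  set h := star x * x
  have h_nonneg : ∀ t ∈ spectrum ℝ h, 0 ≤ t := spectrum_star_mul_self_nonneg
  have h_pos : ∀ t ∈ spectrum ℝ h, 0 < ε ^ 2 + t := fun t ht =>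
    add_pos_of_pos_of_nonneg (by positivity) (h_nonneg t ht)
  let g : ℝ → ℝ := fun t => (ε ^ 2 + t)⁻¹
  let f : ℝ → ℝ := fun t => 1 - g t * t
  have g_cont : ContinuousOn g (spectrum ℝ h) :=
    (continuous_const.add continuous_id).continuousOn.inv₀ fun t ht => (h_pos t ht).ne'
  have f_cont : ContinuousOn f (spectrum ℝ h) := by fun_prop
  have f_eq : ∀ t ∈ spectrum ℝ h, f t = ε ^ 2 / (ε ^ 2 + t) := fun t ht => by
    have := (h_pos t ht).ne'
    simp only [f, g]
    field_simp
    ring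
  have f_nonneg : ∀ t ∈ spectrum ℝ h, 0 ≤ f t := fun t ht => by
    rw [f_eq t ht]
    exact div_nonneg (sq_nonneg ε) (h_pos t ht).le
  have f_le_one : ∀ t ∈ spectrum ℝ h, f t ≤ 1 := fun t ht => by
    rw [f_eq t ht, div_le_one (h_pos t ht)]
    exact le_add_of_nonneg_right (h_nonneg t ht)
  have f_mul_le : ∀ t ∈ spectrum ℝ h, f t * t ≤ ε ^ 2 := fun t ht => by
    rw [f_eq t ht, div_mul_eq_mul_div, div_le_iff₀ (h_pos t ht)]
    exact mul_le_mul_of_nonneg_left (le_add_of_nonneg_left (sq_nonneg ε)) (sq_nonneg ε)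
  have one_sub_eq : 1 - cfc g h * h = cfc f h := by
    rw [cfc_sub (fun _ => 1) (fun t => g t * t) h, cfc_mul g (fun t => t) h, cfc_const_one ℝ h,
      cfc_id' ℝ h]
  refine ⟨cfc g h * h, I.mul_mem_left _ (I.mul_mem_left (star x) hx), ?_, ?_⟩ <;> rw [one_sub_eq]
  · refine norm_cfc_le zero_le_one fun t ht => ?_
    rw [Real.norm_of_nonneg (f_nonneg t ht)]
    exact f_le_one t ht
  · refine norm_mul_cfc_star_mul_self_le x hε.le f_cont fun t ht => ?_
    exact (mul_le_of_le_one_right (mul_nonneg (f_nonneg t ht) (h_nonneg t ht))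
      (f_le_one t ht)).trans (f_mul_le t ht)

theorem sq_norm_quotient_mk_le (I : Ideal A) (x : A) :
    ‖(Submodule.Quotient.mk x : A ⧸ I)‖ ^ 2 ≤ ‖(Submodule.Quotient.mk (star x * x) : A ⧸ I)‖ := by
  refine le_of_forall_pos_le_add fun ε hε => ?_
  obtain ⟨y, hy, hy_norm⟩ :=
    Submodule.Quotient.norm_mk_lt (Submodule.Quotient.mk (star x * x) : A ⧸ I) (half_pos hε)
  have hl : star x * x - y ∈ I := (Submodule.Quotient.eq I).1 hy.symm
  obtain ⟨e, he, he_norm, hle⟩ := exists_mem_norm_mul_one_sub_le I hl (half_pos hε)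
  have hmk : (Submodule.Quotient.mk x : A ⧸ I) = Submodule.Quotient.mk (x * (1 - e)) := by
    rw [Submodule.Quotient.eq, mul_sub, mul_one, sub_sub_cancel]
    exact I.mul_mem_left x he
  calc ‖(Submodule.Quotient.mk x : A ⧸ I)‖ ^ 2
      ≤ ‖x * (1 - e)‖ ^ 2 := by
        rw [hmk]
        gcongr
        exact Submodule.Quotient.norm_mk_le I _
    _ = ‖star (1 - e) * (star x * x * (1 - e))‖ := by
        rw [sq, ← CStarRing.norm_star_mul_self, star_mul]
        simp only [mul_assoc]
    _ ≤ ‖star x * x * (1 - e)‖ := by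
        refine (norm_mul_le _ _).trans (mul_le_of_le_one_left (norm_nonneg _) ?_)
        rwa [norm_star]
    _ = ‖y * (1 - e) + (star x * x - y) * (1 - e)‖ := by rw [← add_mul, add_sub_cancel]
    _ ≤ ‖y‖ * ‖1 - e‖ + ‖(star x * x - y) * (1 - e)‖ :=
        (norm_add_le _ _).trans (by gcongr; exact norm_mul_le _ _)
    _ ≤ ‖(Submodule.Quotient.mk (star x * x) : A ⧸ I)‖ + ε := by
        linarith [mul_le_of_le_one_right (norm_nonneg y) he_norm]

theorem mem_of_star_mul_self_mem (I : Ideal A) [IsClosed (I : Set A)] {x : A}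
    (hx : star x * x ∈ I) : x ∈ I := by
  rw [← Submodule.Quotient.mk_eq_zero I] at hx ⊢
  have hsq := sq_norm_quotient_mk_le I x
  rw [hx, norm_zero] at hsq
  exact norm_eq_zero.1 (pow_eq_zero_iff two_ne_zero |>.1 (hsq.antisymm (sq_nonneg _)))

theorem star_mem_of_mem (I : Ideal A) [I.IsTwoSided] [IsClosed (I : Set A)] {x : A} (hx : x ∈ I) :
    star x ∈ I := by
  refine mem_of_star_mul_self_mem I ?_
  rw [star_star]
  exact I.mul_mem_right _ hx

/-- The involution on the quotient of a C⋆-algebra by a closed two-sided ideal. -/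
noncomputable instance quotientStarRing (I : Ideal A) [I.IsTwoSided] [IsClosed (I : Set A)] :
    StarRing (A ⧸ I) where
  star := QuotientAddGroup.map I.toAddSubgroup I.toAddSubgroup
    (starAddEquiv : A ≃+ A).toAddMonoidHom fun _ => star_mem_of_mem I
  star_involutive := by
    rintro ⟨x⟩
    exact congrArg (Ideal.Quotient.mk I) (star_star x)
  star_mul := by
    rintro ⟨x⟩ ⟨y⟩
    exact congrArg (Ideal.Quotient.mk I) (star_mul x y)
  star_add := map_add _

/-- The quotient of a C⋆-algebra by a closed two-sided ideal, with the quotient norm. -/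
noncomputable instance quotientCStarAlgebra (I : Ideal A) [I.IsTwoSided] [IsClosed (I : Set A)] :
    CStarAlgebra (A ⧸ I) where
  __ := quotientStarRing I
  __ := Ideal.Quotient.ring I
  __ := Submodule.Quotient.normedAddCommGroup I
  __ := Submodule.Quotient.normedSpace I ℂ
  __ := Ideal.Quotient.algebra ℂ
  toCompleteSpace := Submodule.Quotient.completeSpace I
  norm_mul_le := norm_quotient_mul_le I
  norm_mul_self_le := by
    rintro ⟨x⟩
    exact (sq _).symm.trans_le (sq_norm_quotient_mk_le I x)
  star_smul := by
    rintro c ⟨x⟩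
    exact congrArg (Ideal.Quotient.mk I) (star_smul c x)

end ClosedIdeals

section OrthogonalSequences

/-- Pairwise orthogonal nonzero self-adjoint elements: the input of the gliding hump argument. -/
structure IsOrthogonalSeq {R : Type*} [MulZeroClass R] [Star R] (a : ℕ → R) : Prop where
  isSelfAdjoint : ∀ n, IsSelfAdjoint (a n)
  ne_zero : ∀ n, a n ≠ 0
  mul_eq_zero : Pairwise fun m n => a m * a n = 0

theorem IsOrthogonalSeq.map {R S F : Type*} [NonUnitalNonAssocSemiring R] [Star R]
    [NonUnitalNonAssocSemiring S] [Star S] [FunLike F R S] [NonUnitalRingHomClass F R S]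
    [StarHomClass F R S] {a : ℕ → R} (ha : IsOrthogonalSeq a) (f : F)
    (hf : Function.Injective f) : IsOrthogonalSeq (f ∘ a) where
  isSelfAdjoint n := (ha.isSelfAdjoint n).map f
  ne_zero n := (map_ne_zero_iff f hf).2 (ha.ne_zero n)
  mul_eq_zero m n hmn :=
    (map_mul f (a m) (a n)).symm.trans ((congrArg f (ha.mul_eq_zero hmn)).trans (map_zero f))

theorem exists_isOrthogonalSeq_continuousMap (X : Type*) [TopologicalSpace X] [CompactSpace X]
    [T2Space X] [Infinite X] : ∃ a : ℕ → C(X, ℂ), IsOrthogonalSeq a := by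
  obtain ⟨U, U_infinite, U_open, U_disjoint⟩ := exists_seq_infinite_isOpen_pairwise_disjoint X
  choose x hx using fun n => (U_infinite n).nonempty
  choose f f_zero f_one _ using fun n => exists_continuous_zero_one_of_isClosed
    (U_open n).isClosed_compl (isClosed_singleton (x := x n))
    (Set.disjoint_singleton_right.2 (not_not.2 (hx n)))
  refine ⟨fun n => (⟨Complex.ofReal, Complex.continuous_ofReal⟩ : C(ℝ, ℂ)).comp (f n),
    fun n => ?_, fun n h => ?_, fun m n hmn => ?_⟩
  · ext t
    exact Complex.conj_ofReal _
  · have := congrArg (fun g : C(X, ℂ) => g (x n)) h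
    simp [f_one n rfl] at this
  · ext t
    by_cases ht : t ∈ U m
    · have htn : t ∉ U n := (U_disjoint hmn).notMem_of_mem_left ht
      simp [f_zero n htn]
    · simp [f_zero m ht]

-- A maximal chain for the symmetric relation `Commute` is a maximal commuting set.
theorem exists_starSubalgebra_centralizer_eq (A : Type*) [Ring A] [StarRing A] [Algebra ℂ A]
    [StarModule ℂ A] : ∃ C : StarSubalgebra ℂ A, (C : Set A).centralizer = C := by
  let r : selfAdjoint A → selfAdjoint A → Prop := fun x y => Commute (x : A) y
  obtain ⟨S_chain, S_max⟩ : IsMaxChain r (maxChain r) := maxChain_spec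
  let C : StarSubalgebra ℂ A := StarSubalgebra.centralizer ℂ (Subtype.val '' maxChain r)
  have mem_C_iff {z : A} : z ∈ C ↔ ∀ x ∈ maxChain r, Commute (x : A) z := by
    simp only [C, StarSubalgebra.mem_centralizer_iff, Set.forall_mem_image, selfAdjoint.star_val_eq,
      and_self, commute_iff_eq]
  have mem_S_of_mem_C {x : selfAdjoint A} (hx : (x : A) ∈ C) : x ∈ maxChain r := by
    have h_insert : IsChain r (insert x (maxChain r)) :=
      S_chain.insert fun y hy _ => .inr (mem_C_iff.1 hx y hy)
    rw [S_max h_insert (Set.subset_insert x _)]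
    exact Set.mem_insert x _
  have S_commute {x y : selfAdjoint A} (hx : x ∈ maxChain r) (hy : y ∈ maxChain r) :
      Commute (x : A) y := by
    obtain rfl | hxy := eq_or_ne x y
    · exact .refl _
    · exact (S_chain hx hy hxy).elim id Commute.symm
  have realPart_mem {z : A} (hz : z ∈ C) : (realPart z : A) ∈ C := by
    rw [realPart_apply_coe, ← Complex.coe_smul]
    exact C.smul_mem (add_mem hz (star_mem hz)) _
  have imaginaryPart_mem {z : A} (hz : z ∈ C) : (imaginaryPart z : A) ∈ C := by
    rw [imaginaryPart_apply_coe, ← Complex.coe_smul]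
    exact C.smul_mem (C.smul_mem (sub_mem hz (star_mem hz)) _) _
  refine ⟨C, Set.Subset.antisymm (fun z hz => mem_C_iff.2 fun x hx => ?_) fun z hz y hy => ?_⟩
  · exact hz x (mem_C_iff.2 fun y hy => S_commute hy hx)
  · rw [← realPart_add_I_smul_imaginaryPart y]
    exact (mem_C_iff.1 hz _ (mem_S_of_mem_C (realPart_mem hy))).add_left
      ((mem_C_iff.1 hz _ (mem_S_of_mem_C (imaginaryPart_mem hy))).smul_left Complex.I)

open WeakDual in
theorem exists_starProjections_of_finite_characterSpace (B : Type*) [CommCStarAlgebra B]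
    [Fintype (characterSpace ℂ B)] :
    ∃ e : characterSpace ℂ B → B, (∀ φ, IsStarProjection (e φ)) ∧ ∑ φ, e φ = 1 ∧
      ∀ φ b, b * e φ = φ b • e φ := by
  classical
  let δ (φ : characterSpace ℂ B) : C(characterSpace ℂ B, ℂ) := ⟨Pi.single φ 1, by fun_prop⟩
  have δ_apply (φ ψ : characterSpace ℂ B) : δ φ ψ = if ψ = φ then 1 else 0 := Pi.single_apply φ 1 ψ
  have mul_δ (f : C(characterSpace ℂ B, ℂ)) (φ : characterSpace ℂ B) : f * δ φ = f φ • δ φ := by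
    ext ψ
    by_cases h : ψ = φ <;> simp [δ_apply, h]
  let Γ := gelfandStarTransform B
  refine ⟨fun φ => Γ.symm (δ φ), fun φ => ⟨?_, ?_⟩, ?_, fun φ b => Γ.injective ?_⟩
  · rw [IsIdempotentElem, ← map_mul, mul_δ]
    simp [δ_apply]
  · refine .map (f := Γ.symm) ?_
    ext ψ
    by_cases h : ψ = φ <;> simp [δ_apply, h]
  · rw [← map_sum, ← map_one Γ.symm]
    congr 1
    ext ψ
    simp [δ_apply]
  · calc Γ (b * Γ.symm (δ φ)) = Γ b * δ φ := by rw [map_mul, Γ.apply_symm_apply]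
      _ = φ b • δ φ := mul_δ (Γ b) φ
      _ = Γ (φ b • Γ.symm (δ φ)) := by rw [map_smul, Γ.apply_symm_apply]

theorem exists_forall_mul_mul_eq_smul {A : Type*} [NonUnitalCStarAlgebra A] {p q : A}
    (hp : IsStarProjection p) (hq : IsStarProjection q) (hpp : ∀ x, ∃ c : ℂ, p * x * p = c • p)
    (hqq : ∀ x, ∃ c : ℂ, q * x * q = c • q) : ∃ y, ∀ x, ∃ c : ℂ, p * x * q = c • y := by
  by_cases h : ∀ w, p * w * q = 0
  · exact ⟨0, fun x => ⟨0, by rw [h, smul_zero]⟩⟩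
  push Not at h
  obtain ⟨w, hw⟩ := h
  set y := p * w * q
  have star_y : star y = q * star w * p := by
    simp only [y, star_mul, hp.isSelfAdjoint.star_eq, hq.isSelfAdjoint.star_eq, mul_assoc]
  obtain ⟨c, hc⟩ : ∃ c : ℂ, y * star y = c • p := by
    obtain ⟨c, hc⟩ := hpp (w * q * (q * star w))
    exact ⟨c, by rw [star_y, ← hc]; simp only [y, mul_assoc]⟩
  have c_ne : c ≠ 0 := by
    rintro rfl
    exact hw (CStarRing.mul_star_self_eq_zero_iff y |>.1 (hc.trans (zero_smul ℂ p)))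
  refine ⟨y, fun x => ?_⟩
  obtain ⟨d, hd⟩ := hqq (star w * p * (p * x))
  refine ⟨c⁻¹ * d, ?_⟩
  calc p * x * q = c⁻¹ • (c • p) * x * q := by rw [inv_smul_smul₀ c_ne]
    _ = c⁻¹ • (y * star y * (p * x * q)) := by
        rw [hc]
        simp only [smul_mul_assoc, mul_assoc, hp.isIdempotentElem.mul_self_mul]
    _ = c⁻¹ • (y * (q * (star w * p * (p * x)) * q)) := by
        rw [star_y]
        simp only [mul_assoc]
    _ = (c⁻¹ * d) • y := by
        rw [hd, mul_smul_comm, smul_smul]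
        simp only [y, mul_assoc, hq.isIdempotentElem.eq]

theorem finiteDimensional_of_sum_starProjections_eq_one {A ι : Type*} [CStarAlgebra A] [Fintype ι]
    {e : ι → A} (he : ∀ i, IsStarProjection (e i)) (he_sum : ∑ i, e i = 1)
    (he_corner : ∀ i x, ∃ c : ℂ, e i * x * e i = c • e i) : FiniteDimensional ℂ A := by
  choose y hy using fun i j =>
    exists_forall_mul_mul_eq_smul (he i) (he j) (he_corner i) (he_corner j)
  let s : Set A := Set.range fun ij : ι × ι => y ij.1 ij.2
  have span_eq_top : Submodule.span ℂ s = ⊤ := by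
    refine eq_top_iff.2 fun x _ => ?_
    have x_eq : x = ∑ i, ∑ j, e i * x * e j := by
      simp_rw [← Finset.mul_sum, ← Finset.sum_mul, he_sum, one_mul, mul_one]
    rw [x_eq]
    refine sum_mem fun i _ => sum_mem fun j _ => ?_
    obtain ⟨c, hc⟩ := hy i j x
    rw [hc]
    exact Submodule.smul_mem _ c (Submodule.subset_span ⟨(i, j), rfl⟩)
  exact .of_fg_top (Submodule.fg_def.2 ⟨s, Set.finite_range _, span_eq_top⟩)

theorem exists_mul_mul_eq_smul_of_centralizer_eq {R A : Type*} [CommSemiring R] [Semiring A]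
    [Algebra R A] {S : Set A} (hS : S.centralizer = S) {p : A} (hp : IsIdempotentElem p)
    (hpS : p ∈ S) (h : ∀ c ∈ S, ∃ k : R, c * p = k • p) (x : A) : ∃ k : R, p * x * p = k • p := by
  have corner_mem : p * x * p ∈ S := by
    rw [← hS]
    intro c hc
    obtain ⟨k, hk⟩ := h c hc
    have hk' : p * c = k • p := by
      rw [← hS] at hpS
      rw [← hpS c hc, hk]
    rw [mul_assoc (p * x), hk', mul_assoc, ← mul_assoc c, hk, smul_mul_assoc, mul_smul_comm,
      mul_assoc]
  obtain ⟨k, hk⟩ := h _ corner_mem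
  exact ⟨k, by rw [← hk, mul_assoc _ p, hp.eq]⟩

open WeakDual in
theorem exists_isOrthogonalSeq_of_not_finiteDimensional {A : Type*} [CStarAlgebra A]
    (hA : ¬ FiniteDimensional ℂ A) : ∃ a : ℕ → A, IsOrthogonalSeq a := by
  obtain ⟨C, hC⟩ := exists_starSubalgebra_centralizer_eq A
  have : IsClosed (C : Set A) := hC ▸ Set.isClosed_centralizer _
  let : CommCStarAlgebra C :=
    { (inferInstance : CStarAlgebra C) with
      mul_comm := fun a b => Subtype.ext ((hC.ge b.2) a a.2) }
  cases finite_or_infinite (characterSpace ℂ C) with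
  | inl _ =>
    have := Fintype.ofFinite (characterSpace ℂ C)
    obtain ⟨e, he, he_sum, he_mul⟩ := exists_starProjections_of_finite_characterSpace C
    refine (hA (finiteDimensional_of_sum_starProjections_eq_one (e := fun φ => (e φ : A))
      (fun φ => (he φ).map C.subtype) ?_ fun φ => ?_)).elim
    · exact_mod_cast congrArg Subtype.val he_sum
    · exact exists_mul_mul_eq_smul_of_centralizer_eq hC ((he φ).isIdempotentElem.map C.subtype)
        (e φ).2 fun c hc => ⟨φ ⟨c, hc⟩, congrArg Subtype.val (he_mul φ ⟨c, hc⟩)⟩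
  | inr _ =>
    obtain ⟨a, ha⟩ := exists_isOrthogonalSeq_continuousMap (characterSpace ℂ C)
    exact ⟨_, (ha.map (gelfandStarTransform C).symm (EquivLike.injective _)).map C.subtype
      Subtype.val_injective⟩

end OrthogonalSequences

section Factorization

theorem norm_mul_le_norm_mul_of_mul_star_le {A : Type*} [NonUnitalCStarAlgebra A] [PartialOrder A]
    [StarOrderedRing A] {w z : A} (h : w * star w ≤ z * star z) (a : A) : ‖a * w‖ ≤ ‖a * z‖ := by
  have h_conj : a * w * star (a * w) ≤ a * z * star (a * z) := by
    simpa only [star_mul, mul_assoc] using star_right_conjugate_le_conjugate h a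
  rw [← sq_le_sq₀ (norm_nonneg _) (norm_nonneg _), sq, sq, ← CStarRing.norm_self_mul_star,
    ← CStarRing.norm_self_mul_star]
  exact CStarAlgebra.norm_le_norm_of_nonneg_of_le (mul_star_self_nonneg _) h_conj

variable {A : Type*} [CStarAlgebra A]

theorem exists_seq_tendsto_mul_star_mul_self (b : A) :
    ∃ d : ℕ → A, Tendsto (fun n => d n * (star b * b)) atTop (𝓝 b) := by
  have : IsClosed ((Ideal.span {star b * b}).closure : Set A) := isClosed_closure
  have hb : b ∈ (Ideal.span {star b * b}).closure :=
    mem_of_star_mul_self_mem _ (subset_closure (Ideal.mem_span_singleton_self _))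
  obtain ⟨u, hu, hub⟩ := mem_closure_iff_seq_limit.1 hb
  choose d hd using fun n => Ideal.mem_span_singleton'.1 (hu n)
  exact ⟨d, by simpa only [hd] using hub⟩

-- If `d n * (b⋆ b) → b`, the order hypothesis forces `d n * w` to converge, and `v` is its limit.
theorem exists_eq_star_mul_of_mul_star_le [PartialOrder A] [StarOrderedRing A] {b w : A}
    (h : w * star w ≤ star b * b * (star b * b)) : ∃ v, w = star b * v ∧ ‖v‖ ≤ ‖b‖ := by
  obtain ⟨d, hd⟩ := exists_seq_tendsto_mul_star_mul_self b
  have norm_mul_w_le (a : A) : ‖a * w‖ ≤ ‖a * (star b * b)‖ :=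
    norm_mul_le_norm_mul_of_mul_star_le (h.trans_eq (by rw [star_mul, star_star])) a
  have dw_cauchy : CauchySeq fun n => d n * w := by
    refine Metric.cauchySeq_iff'.2 fun ε hε => ?_
    obtain ⟨N, hN⟩ := Metric.cauchySeq_iff'.1 hd.cauchySeq ε hε
    refine ⟨N, fun n hn => (hN n hn).trans_le' ?_⟩
    rw [dist_eq_norm, dist_eq_norm, ← sub_mul, ← sub_mul]
    exact norm_mul_w_le _
  obtain ⟨v, hv⟩ := cauchySeq_tendsto_of_complete dw_cauchy
  have defect_tendsto : Tendsto (fun n => (star b * d n - 1) * w) atTop (𝓝 0) := by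
    refine squeeze_zero_norm (fun n => norm_mul_w_le _) ?_
    have := ((hd.const_mul (star b)).sub_const (star b * b)).norm
    simpa only [sub_mul, one_mul, mul_assoc, sub_self, norm_zero] using this
  have defect_tendsto' : Tendsto (fun n => (star b * d n - 1) * w) atTop (𝓝 (star b * v - w)) := by
    simpa only [sub_mul, one_mul, mul_assoc] using (hv.const_mul (star b)).sub_const w
  exact ⟨v, (sub_eq_zero.1 (tendsto_nhds_unique defect_tendsto' defect_tendsto)).symm,
    le_of_tendsto_of_tendsto' hv.norm hd.norm fun n => norm_mul_w_le _⟩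

theorem sqrt_mem_of_mem [PartialOrder A] [StarOrderedRing A] (I : Ideal A) [IsClosed (I : Set A)]
    {c : A} (hc : c ∈ I) (hc0 : 0 ≤ c) : CFC.sqrt c ∈ I := by
  refine mem_of_star_mul_self_mem I ?_
  rwa [(IsSelfAdjoint.of_nonneg (CFC.sqrt_nonneg c)).star_eq, CFC.sqrt_mul_sqrt_self c]

-- The common factor is `b = (∑ i, wᵢ wᵢ⋆) ^ (1 / 4)`.
theorem exists_common_left_factor (I : Ideal A) [I.IsTwoSided] [IsClosed (I : Set A)] {ι : Type*}
    {w : ι → A} (hw : ∀ i, w i ∈ I) (hw_sum : Summable fun i => ‖w i‖ ^ 2) :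
    ∃ b ∈ I, ∃ v : ι → A, ∀ i, w i = b * v i ∧ ‖v i‖ ≤ ‖b‖ := by
  let := CStarAlgebra.spectralOrder A
  have := CStarAlgebra.spectralOrderedRing A
  have summable_mul_star : Summable fun i => w i * star (w i) :=
    .of_norm <| by simpa only [CStarRing.norm_self_mul_star, ← sq] using hw_sum
  set c := ∑' i, w i * star (w i)
  have c_nonneg : 0 ≤ c := tsum_nonneg fun i => mul_star_self_nonneg _
  have c_mem : c ∈ I := tsum_mem ‹IsClosed (I : Set A)› fun i => I.mul_mem_right _ (hw i)
  set b := CFC.sqrt (CFC.sqrt c)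
  have b_mem : b ∈ I := sqrt_mem_of_mem I (sqrt_mem_of_mem I c_mem c_nonneg) (CFC.sqrt_nonneg c)
  have star_b : star b = b := (IsSelfAdjoint.of_nonneg (CFC.sqrt_nonneg _)).star_eq
  have b_pow : star b * b * (star b * b) = c := by
    rw [star_b, CFC.sqrt_mul_sqrt_self _ (CFC.sqrt_nonneg c), CFC.sqrt_mul_sqrt_self c c_nonneg]
  choose v hwv hv using fun i => exists_eq_star_mul_of_mul_star_le (b := b) (w := w i) <| by
    rw [b_pow]
    exact summable_mul_star.le_tsum i fun j _ => mul_star_self_nonneg _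
  exact ⟨b, b_mem, v, fun i => ⟨star_b ▸ hwv i, hv i⟩⟩

end Factorization

section LinearMaps

variable {𝕜 E F : Type*} [NontriviallyNormedField 𝕜] [NormedAddCommGroup E] [NormedSpace 𝕜 E]
  [NormedAddCommGroup F] [NormedSpace 𝕜 F]

theorem exists_norm_lt_lt_norm_of_not_continuous {T : E →ₗ[𝕜] F} (hT : ¬ Continuous T) {ε : ℝ}
    (hε : 0 < ε) (N : ℝ) : ∃ x, ‖x‖ < ε ∧ N < ‖T x‖ := by
  contrapose! hT
  obtain ⟨C, hC⟩ := T.bound_of_ball_bound hε N fun x hx => hT x (mem_ball_zero_iff.1 hx)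
  exact (T.mkContinuous C hC).continuous

theorem continuous_of_continuous_domRestrict [CompleteSpace 𝕜] (T : E →ₗ[𝕜] F)
    (p : Submodule 𝕜 E) [IsClosed (p : Set E)] [FiniteDimensional 𝕜 (E ⧸ p)]
    (hT : Continuous (T.domRestrict p)) : Continuous T := by
  obtain ⟨π, hπ⟩ := Submodule.ClosedComplemented.of_finiteDimensional_quotient
    ‹IsClosed (p : Set E)›
  let S : E →ₗ[𝕜] F := T - T.domRestrict p ∘ₗ π
  have p_le_ker : p ≤ LinearMap.ker S := fun x hx => by
    simp [S, hπ ⟨x, hx⟩]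
  have S_continuous : Continuous S := by
    rw [← p.liftQ_mkQ S p_le_ker, LinearMap.coe_comp]
    exact (LinearMap.continuous_of_finiteDimensional _).comp p.mkQL.continuous
  have T_eq : ⇑T = fun x => S x + T.domRestrict p (π x) := by
    ext x
    simp [S]
  rw [T_eq]
  exact S_continuous.add (hT.comp π.continuous)

theorem exists_ne_zero_summable_norm_smul (a : ℕ → E) :
    ∃ t : ℕ → 𝕜, (∀ n, t n ≠ 0) ∧ Summable fun n => ‖t n • a n‖ := by
  have small_multiple (n : ℕ) : ∃ t : 𝕜, t ≠ 0 ∧ ‖t • a n‖ ≤ (1 / 2) ^ n := by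
    have bound_pos : 0 < (1 / 2) ^ n / (‖a n‖ + 1) := by positivity
    obtain ⟨t, ht0, ht⟩ := NormedField.exists_norm_lt 𝕜 bound_pos
    refine ⟨t, norm_pos_iff.1 ht0, ?_⟩
    rw [lt_div_iff₀ (by positivity)] at ht
    calc ‖t • a n‖ = ‖t‖ * ‖a n‖ := norm_smul t (a n)
      _ ≤ ‖t‖ * (‖a n‖ + 1) := by gcongr; exact le_add_of_nonneg_right zero_le_one
      _ ≤ (1 / 2) ^ n := ht.le
  choose t ht0 ht using small_multiple
  exact ⟨t, ht0, .of_nonneg_of_le (fun _ => norm_nonneg _) ht summable_geometric_two⟩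

end LinearMaps

section IntertwiningMaps

theorem exists_eq_mul_add_of_pairwise_mul_mem {R : Type*} [NormedRing R] [CompleteSpace R]
    (I : Ideal R) [I.IsTwoSided] [IsClosed (I : Set R)] {a c : ℕ → R}
    (ha_sum : Summable fun n => ‖a n‖) (ha : Pairwise fun m n => a m * a n ∈ I)
    (hc : ∀ n, ‖c n‖ ≤ 1) :
    ∃ b, ‖b‖ ≤ ∑' n, ‖a n‖ ∧
      ∀ n, ∃ r, b = a n * c n + r ∧ a n * r ∈ I ∧ ‖r‖ ≤ ∑' n, ‖a n‖ := by
  have norm_le (n : ℕ) : ‖a n * c n‖ ≤ ‖a n‖ :=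
    (norm_mul_le _ _).trans (mul_le_of_le_one_right (norm_nonneg _) (hc n))
  have norm_ite_le (n k : ℕ) : ‖if k = n then 0 else a k * c k‖ ≤ ‖a k‖ := by
    split_ifs
    · exact norm_zero.trans_le (norm_nonneg _)
    · exact norm_le k
  refine ⟨∑' k, a k * c k, tsum_of_norm_bounded ha_sum.hasSum norm_le, fun n =>
    ⟨∑' k, if k = n then 0 else a k * c k,
      (Summable.of_norm_bounded ha_sum norm_le).tsum_eq_add_tsum_ite n, ?_,
      tsum_of_norm_bounded ha_sum.hasSum (norm_ite_le n)⟩⟩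
  rw [← (Summable.of_norm_bounded ha_sum (norm_ite_le n)).tsum_mul_left]
  refine tsum_mem ‹IsClosed (I : Set R)› fun k => ?_
  split_ifs with hk
  · exact (mul_zero (a n)).symm ▸ I.zero_mem
  · exact mul_assoc (a n) (a k) (c k) ▸ I.mul_mem_right _ (ha (Ne.symm hk))

variable {A : Type*} [CStarAlgebra A]

theorem continuous_domRestrict_of_forall_continuous_mul_left {V : Type*} [NormedAddCommGroup V]
    [NormedSpace ℝ V] (I : Ideal A) [I.IsTwoSided] [IsClosed (I : Set A)] (H : A →ₗ[ℝ] V)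
    (hI : ∀ b ∈ I, Continuous fun c => H (b * c)) :
    Continuous (H.domRestrict (I.restrictScalars ℝ)) := by
  by_contra h
  choose w w_lt lt_Hw using fun n : ℕ =>
    exists_norm_lt_lt_norm_of_not_continuous h (ε := (1 / 2) ^ n) (by positivity) n
  have summable_sq : Summable fun n => ‖(w n : A)‖ ^ 2 := by
    refine .of_nonneg_of_le (fun _ => sq_nonneg _) (fun n => ?_) summable_geometric_two
    calc ‖(w n : A)‖ ^ 2 ≤ ‖(w n : A)‖ := by
          refine pow_le_of_le_one (norm_nonneg _) ((w_lt n).le.trans ?_) two_ne_zero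
          exact pow_le_one₀ (by norm_num) (by norm_num)
      _ ≤ (1 / 2) ^ n := (w_lt n).le
  obtain ⟨b, hb, v, hv⟩ := exists_common_left_factor I (fun n => (w n).2) summable_sq
  let T : A →L[ℝ] V := ⟨H ∘ₗ LinearMap.mulLeft ℝ b, hI b hb⟩
  obtain ⟨n, hn⟩ := exists_nat_gt (‖T‖ * ‖b‖)
  refine (hn.trans (lt_Hw n)).not_ge ?_
  calc ‖H (w n)‖ = ‖T (v n)‖ := by rw [(hv n).1]; rfl
    _ ≤ ‖T‖ * ‖b‖ := T.le_opNorm_of_le (hv n).2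

/-- `H` intertwines left multiplication by `b` with the operator `G b`, up to an error that is
continuous for each `b`. The family `G` is arbitrary: it does not make `V` a module. -/
structure IsLeftIntertwining {V : Type*} [NormedAddCommGroup V] [NormedSpace ℝ V]
    (G : A → V →L[ℝ] V) (H : A →ₗ[ℝ] V) : Prop where
  continuous_sub : ∀ b, Continuous fun c => H (b * c) - G b (H c)
  continuous_apply : ∀ c, Continuous fun b => G b (H c)

namespace IsLeftIntertwining

variable {V : Type*} [NormedAddCommGroup V] [NormedSpace ℝ V] {G : A → V →L[ℝ] V} {H : A →ₗ[ℝ] V}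

/-- The continuity ideal of an intertwining map `H`: the elements `b` for which `c ↦ H (b * c)` is
continuous. -/
def continuityIdeal (h : IsLeftIntertwining G H) : Ideal A where
  carrier := {b | Continuous fun c => H (b * c)}
  add_mem' {x y} hx hy := (Continuous.add hx hy).congr fun c => by rw [add_mul, map_add]; rfl
  zero_mem' := continuous_zero.congr fun c => by rw [zero_mul, map_zero]; rfl
  smul_mem' x b hb :=
    (((h.continuous_sub x).comp (continuous_const_mul b)).add ((G x).continuous.comp hb)).congr
      fun c => by simp [mul_assoc]

theorem mem_continuityIdeal (h : IsLeftIntertwining G H) {b : A} :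
    b ∈ h.continuityIdeal ↔ Continuous fun c => H (b * c) := Iff.rfl

theorem mem_continuityIdeal_iff_continuous_comp (h : IsLeftIntertwining G H) {b : A} :
    b ∈ h.continuityIdeal ↔ Continuous (G b ∘ H) := by
  refine ⟨fun hb => ?_, fun hb => ?_⟩
  · exact ((h.mem_continuityIdeal.1 hb).sub (h.continuous_sub b)).congr fun c => sub_sub_cancel _ _
  · exact ((h.continuous_sub b).add hb).congr fun c => sub_add_cancel _ _

instance (h : IsLeftIntertwining G H) : h.continuityIdeal.IsTwoSided where
  mul_mem_of_left x hb :=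
    ((h.mem_continuityIdeal.1 hb).comp (continuous_const_mul x)).congr fun c => by
      rw [Function.comp_apply, mul_assoc]

-- Banach–Steinhaus: the maps `c ↦ G b (H c)` depend on `b` continuously, pointwise in `c`.
instance (h : IsLeftIntertwining G H) : IsClosed (h.continuityIdeal : Set A) := by
  refine IsSeqClosed.isClosed fun u b hu hub => ?_
  let T (n : ℕ) : A →L[ℝ] V :=
    ⟨(G (u n) : V →ₗ[ℝ] V) ∘ₗ H, h.mem_continuityIdeal_iff_continuous_comp.1 (hu n)⟩
  have T_tendsto : Tendsto (fun n c => T n c) atTop (𝓝 (G b ∘ H)) :=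
    tendsto_pi_nhds.2 fun c => ((h.continuous_apply c).tendsto b).comp hub
  exact h.mem_continuityIdeal_iff_continuous_comp.2
    (continuousLinearMapOfTendsto T T_tendsto).continuous

/-- The error `c ↦ H (b * c) - G b (H c)` of an intertwining map, as a continuous linear map. -/
noncomputable def error (h : IsLeftIntertwining G H) (b : A) : A →L[ℝ] V :=
  ⟨H ∘ₗ LinearMap.mulLeft ℝ b - (G b : V →ₗ[ℝ] V) ∘ₗ H, h.continuous_sub b⟩

theorem map_mul_eq (h : IsLeftIntertwining G H) (b c : A) :
    H (b * c) = G b (H c) + h.error b c :=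
  (add_sub_cancel _ _).symm

-- Gliding hump: if `c n` is large enough under `H (a n * a n * ·)`, then `G (a n)` is unbounded at
-- `H (∑ k, a k * c k)`, although `a n → 0`.
theorem exists_mul_self_mem_continuityIdeal (h : IsLeftIntertwining G H) {a : ℕ → A}
    (ha_sum : Summable fun n => ‖a n‖)
    (ha : Pairwise fun m n => a m * a n ∈ h.continuityIdeal) :
    ∃ n, a n * a n ∈ h.continuityIdeal := by
  by_contra! h_notMem
  let J : h.continuityIdeal.restrictScalars ℝ →L[ℝ] V :=
    ⟨_, continuous_domRestrict_of_forall_continuous_mul_left h.continuityIdeal H fun _ => id⟩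
  set M := ∑' n, ‖a n‖
  choose c c_lt lt_Hc using fun n : ℕ =>
    exists_norm_lt_lt_norm_of_not_continuous (T := H ∘ₗ LinearMap.mulLeft ℝ (a n * a n))
      (h_notMem n) one_pos (n + ‖h.error (a n)‖ * M + ‖J‖ * (‖a n‖ * M))
  obtain ⟨b, b_le, hb⟩ := exists_eq_mul_add_of_pairwise_mul_mem _ ha_sum ha fun n => (c_lt n).le
  have lt_norm_G (n : ℕ) : n < ‖G (a n) (H b)‖ := by
    obtain ⟨r, b_eq, r_mem, r_le⟩ := hb n
    have G_eq : G (a n) (H b) = H (a n * a n * c n) + J ⟨a n * r, r_mem⟩ - h.error (a n) b := by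
      rw [eq_sub_iff_add_eq, ← h.map_mul_eq, b_eq, mul_add, ← mul_assoc, map_add]
      rfl
    have error_le : ‖h.error (a n) b‖ ≤ ‖h.error (a n)‖ * M := (h.error (a n)).le_opNorm_of_le b_le
    have J_le : ‖J ⟨a n * r, r_mem⟩‖ ≤ ‖J‖ * (‖a n‖ * M) :=
      J.le_opNorm_of_le ((norm_mul_le (a n) r).trans (by gcongr))
    have lt_H : n + ‖h.error (a n)‖ * M + ‖J‖ * (‖a n‖ * M) < ‖H (a n * a n * c n)‖ := lt_Hc n
    rw [G_eq]
    linarith [norm_sub_le_norm_add (H (a n * a n * c n)) (J ⟨a n * r, r_mem⟩),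
      norm_sub_norm_le (H (a n * a n * c n) + J ⟨a n * r, r_mem⟩) (h.error (a n) b)]
  have G_tendsto : Tendsto (fun n => ‖G (a n) (H b)‖) atTop (𝓝 ‖G 0 (H b)‖) :=
    (((h.continuous_apply b).tendsto 0).comp
      (tendsto_zero_iff_norm_tendsto_zero.2 ha_sum.tendsto_atTop_zero)).norm
  exact not_tendsto_nhds_of_tendsto_atTop
    (tendsto_atTop_mono (fun n => (lt_norm_G n).le) tendsto_natCast_atTop_atTop) _ G_tendsto

theorem finiteDimensional_quotient_continuityIdeal (h : IsLeftIntertwining G H) :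
    FiniteDimensional ℂ (A ⧸ h.continuityIdeal) := by
  by_contra h_infinite
  obtain ⟨x, hx⟩ := exists_isOrthogonalSeq_of_not_finiteDimensional h_infinite
  choose a ha using fun n => Ideal.Quotient.mk_surjective (x n)
  obtain ⟨t, t_ne, h_sum⟩ := exists_ne_zero_summable_norm_smul (𝕜 := ℂ) a
  have mk_mul (m n : ℕ) : Ideal.Quotient.mk h.continuityIdeal (t m • a m * t n • a n) =
      (t m * t n) • (x m * x n) := by
    rw [smul_mul_smul_comm, ← ha, ← ha, ← map_mul]
    rfl
  obtain ⟨n, hn⟩ := h.exists_mul_self_mem_continuityIdeal h_sum fun m n hmn =>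
    Ideal.Quotient.eq_zero_iff_mem.1 (by rw [mk_mul, hx.mul_eq_zero hmn, smul_zero])
  rw [← Ideal.Quotient.eq_zero_iff_mem, mk_mul,
    smul_eq_zero_iff_right (mul_ne_zero (t_ne n) (t_ne n))] at hn
  refine hx.ne_zero n (CStarRing.star_mul_self_eq_zero_iff (x n) |>.1 ?_)
  rwa [(hx.isSelfAdjoint n).star_eq]

protected theorem continuous (h : IsLeftIntertwining G H) : Continuous H := by
  have := h.finiteDimensional_quotient_continuityIdeal
  have : IsClosed (h.continuityIdeal.restrictScalars ℝ : Set A) :=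
    inferInstanceAs (IsClosed (h.continuityIdeal : Set A))
  have : FiniteDimensional ℝ (A ⧸ h.continuityIdeal.restrictScalars ℝ) :=
    have : FiniteDimensional ℝ (A ⧸ h.continuityIdeal) := .complexToReal _
    .of_surjective (Submodule.Quotient.restrictScalarsEquiv ℝ h.continuityIdeal).symm.toLinearMap
      (LinearEquiv.surjective _)
  exact continuous_of_continuous_domRestrict H (h.continuityIdeal.restrictScalars ℝ)
    (continuous_domRestrict_of_forall_continuous_mul_left h.continuityIdeal H fun _ => id)

end IsLeftIntertwining

end IntertwiningMaps

section Derivations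

theorem continuous_mul_const_of_forall_map_mul {R : Type*} [Ring R] [TopologicalSpace R]
    [IsTopologicalRing R] {D E : R →+ R} {F G H : R → R} (hG : ContinuousAt G 0)
    (hD : ∀ a b, D (a * b) = E a * F b + G a * H b) (c : R) : Continuous fun b => G b * H c := by
  let T : R →+ R := D.comp (AddMonoidHom.mulRight c) - (AddMonoidHom.mulRight (F c)).comp E
  have T_eq : (fun b => G b * H c) = T := by
    ext b
    exact (sub_eq_of_eq_add' (hD b c)).symm
  rw [T_eq]
  exact continuous_of_continuousAt_zero T (T_eq ▸ hG.mul_const (H c))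

theorem continuous_const_mul_of_forall_map_mul {R : Type*} [Ring R] [TopologicalSpace R]
    [IsTopologicalRing R] {D H : R →+ R} {E F G : R → R} (hF : ContinuousAt F 0)
    (hD : ∀ a b, D (a * b) = E a * F b + G a * H b) (a : R) : Continuous fun b => E a * F b := by
  let T : R →+ R := D.comp (AddMonoidHom.mulLeft a) - (AddMonoidHom.mulLeft (G a)).comp H
  have T_eq : (fun b => E a * F b) = T := by
    ext b
    exact (sub_eq_of_eq_add (hD a b)).symm
  rw [T_eq]
  exact continuous_of_continuousAt_zero T (T_eq ▸ hF.const_mul (E a))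

variable {A : Type*} [CStarAlgebra A]

theorem isLeftIntertwining_of_forall_map_mul {D E : A →+ A} {H : A →ₗ[ℝ] A} {F G : A → A}
    (hF : ContinuousAt F 0) (hG : ContinuousAt G 0)
    (hD : ∀ a b, D (a * b) = E a * F b + G a * H b) (hG1 : 1 ∈ Set.range G)
    (hGH : ∀ a b c, (G (a * b) - G a * G b) * H c = 0) :
    IsLeftIntertwining (fun b => ContinuousLinearMap.mul ℝ A (G b)) H := by
  have EF_continuous (a : A) : Continuous fun c => E a * F c :=
    continuous_const_mul_of_forall_map_mul (H := H.toAddMonoidHom) hF hD a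
  refine ⟨fun b => ?_, continuous_mul_const_of_forall_map_mul hG hD⟩
  obtain ⟨a, ha⟩ := hG1
  have G_mul (c : A) : G (a * b) * H c = G b * H c := by
    rw [← sub_eq_zero, ← sub_mul, ← hGH a b c, ha, one_mul]
  have D_assoc (c : A) : H (b * c) - G b * H c = E (a * b) * F c - E a * F (b * c) := by
    rw [sub_eq_sub_iff_add_eq_add, ← G_mul, ← hD, mul_assoc, hD, ha, one_mul, add_comm]
  simp only [ContinuousLinearMap.mul_apply', D_assoc]
  exact (EF_continuous (a * b)).sub ((EF_continuous a).comp (continuous_const_mul b))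

theorem continuous_of_forall_map_mul_sub_mul_eq_zero {D E : A →+ A} {H : A →ₗ[ℝ] A} {F G : A → A}
    (hF : ContinuousAt F 0) (hG : ContinuousAt G 0)
    (hD : ∀ a b, D (a * b) = E a * F b + G a * H b) (hF1 : 1 ∈ Set.range F)
    (hG1 : 1 ∈ Set.range G) (hGH : ∀ a b c, (G (a * b) - G a * G b) * H c = 0) :
    Continuous D ∧ Continuous E ∧ Continuous H := by
  have H_continuous := (isLeftIntertwining_of_forall_map_mul hF hG hD hG1 hGH).continuous
  have D_eq : ⇑D = fun c => E 1 * F c + G 1 * H c := funext fun c => by rw [← hD, one_mul]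
  have D_continuous : Continuous D := by
    rw [D_eq]
    exact (continuous_const_mul_of_forall_map_mul (H := H.toAddMonoidHom) hF hD 1).add
      (H_continuous.const_mul (G 1))
  obtain ⟨b, hb⟩ := hF1
  have E_eq : ⇑E = fun c => D (c * b) - G c * H b :=
    funext fun c => by rw [hD, hb, mul_one, add_sub_cancel_right]
  have E_continuous : Continuous E := by
    rw [E_eq]
    exact (D_continuous.comp (continuous_mul_const b)).sub
      (continuous_mul_const_of_forall_map_mul hG hD b)
  exact ⟨D_continuous, E_continuous, H_continuous⟩

open MulOpposite in
theorem stmt15_general (D : A →+ A) (E H : A →ₗ[ℝ] A) (F G : A → A)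
    (hF1 : 1 ∈ Set.range F) (hG1 : 1 ∈ Set.range G)
    (hF : ContinuousAt F 0) (hG : ContinuousAt G 0)
    (hD : ∀ a b, D (a * b) = E a * F b + G a * H b)
    (hyp : (∀ a b c, (G (a * b) - G a * G b) * H c = 0) ∨
      ∀ a b c, E c * (F (a * b) - F a * F b) = 0) :
    Continuous D ∧ Continuous E ∧ Continuous H := by
  obtain hGH | hEF := hyp
  · exact continuous_of_forall_map_mul_sub_mul_eq_zero (E := E.toAddMonoidHom) hF hG hD hF1 hG1 hGH
  · have continuousAt_op {f : A → A} (hf : ContinuousAt f 0) : ContinuousAt (op ∘ f ∘ unop) 0 :=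
      continuous_op.continuousAt.comp
        (ContinuousAt.comp (f := unop) (x := (0 : Aᵐᵒᵖ)) hf continuous_unop.continuousAt)
    have one_mem_range_op {f : A → A} (hf : 1 ∈ Set.range f) : 1 ∈ Set.range (op ∘ f ∘ unop) :=
      let ⟨a, ha⟩ := hf
      ⟨op a, congrArg op ha⟩
    have continuous_of_op {f : A → A} (hf : Continuous (op ∘ f ∘ unop)) : Continuous f :=
      continuous_unop.comp (hf.comp continuous_op)
    obtain ⟨hD', hH', hE'⟩ := continuous_of_forall_map_mul_sub_mul_eq_zero (A := Aᵐᵒᵖ)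
      (D := D.mulOp) (E := H.toAddMonoidHom.mulOp) (H := (opLinearEquiv ℝ).conj E)
      (F := op ∘ G ∘ unop) (G := op ∘ F ∘ unop) (continuousAt_op hG) (continuousAt_op hF)
      (fun a b => unop_injective ((hD b.unop a.unop).trans (add_comm _ _)))
      (one_mem_range_op hG1) (one_mem_range_op hF1)
      (fun a b c => unop_injective (hEF b.unop a.unop c.unop))
    exact ⟨continuous_of_op hD', continuous_of_op hE', continuous_of_op hH'⟩

end Derivations

/-- for an `(E, F, G, H)`-derivation `D₁` on a C*-algebra `A` with `E, H`
linear, `F, G` surjective and continuous at zero, satisfying one of the two annihilation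
conditions, the maps `D₁`, `E` and `H` are continuous. -/
theorem stmt15 {A : Type*} [NormedRing A] [StarRing A] [CStarRing A] [CompleteSpace A]
    [NormedAlgebra ℂ A] [StarModule ℂ A]
    (D₁ E H F G : A → A)
    (hD₁ : IsLinearMap ℂ D₁) (hE : IsLinearMap ℂ E) (hH : IsLinearMap ℂ H)
    (hFsurj : Function.Surjective F) (hGsurj : Function.Surjective G)
    (hF : ContinuousAt F 0) (hG : ContinuousAt G 0)
    (hid : ∀ a b : A, D₁ (a * b) = E a * F b + G a * H b)
    (hyp : (∀ a b c : A, (G (a * b) - G a * G b) * H c = 0) ∨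
      (∀ a b c : A, E c * (F (a * b) - F a * F b) = 0)) :
    Continuous D₁ ∧ Continuous E ∧ Continuous H :=
  let : CStarAlgebra A := {}
  stmt15_general (hD₁.mk' D₁).toAddMonoidHom ((hE.mk' E).restrictScalars ℝ)
    ((hH.mk' H).restrictScalars ℝ) F G (hFsurj 1) (hGsurj 1) hF hG hid hyp
end
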